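/- Under the compact nonzero-sum game setup with the quantization condition lim_{δ→0} ω_δ(2δ) = 0, let T ∈ ℕ be the horizon and for each δ > 0 let π*_δ be a Markov perfect Nash equilibrium of the finite δ-model (which exists by Rieder's theorem). Then for each player i = 1,…,N and each t = 0,…,T, sup_{x∈X} |Ĵ*_{δ,t}(π^{*,-i}_δ; x) − J*_t(π^{*,-i}_δ; x)| → 0 as δ → 0, where Ĵ*_{δ,t}(π^{*,-i}_δ;·) is the piecewise-constant extension to X of the finite-model best-response value at time t and J*_t(π^{*,-i}_δ;·) is the original-model best-response value at time t against the extended equilibrium policies. -/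

import Mathlib

open MeasureTheory Filter Topology

noncomputable section

/-- Total variation distance between two measures:
`‖μ − ν‖_TV = 2 sup_{D measurable} |μ(D) − ν(D)|`. -/
def tvDist {α : Type*} [MeasurableSpace α] (μ ν : Measure α) : ℝ :=
  2 * ⨆ D : {D : Set α // MeasurableSet D}, |(μ D.1).toReal - (ν D.1).toReal|

/-- The normalized restriction `ν^z_δ` of `ν` to the quantization cell `Q⁻¹{z}`. -/
def cellMeasure {X : Type*} [MeasurableSpace X] (ν : Measure X) (Q : X → X) (z : X) :
    Measure X :=
  (ν (Q ⁻¹' {z}))⁻¹ • ν.restrict (Q ⁻¹' {z})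


section helpers

lemma fh_setwise {Y X : Type*} [TopologicalSpace Y] [FirstCountableTopology Y]
    [MeasurableSpace X] (p : Y → Measure X) (hp : ∀ y, IsProbabilityMeasure (p y))
    (hs : ∀ D : Set X, MeasurableSet D → Continuous fun y => (p y D).toReal)
    (f : X → ℝ) (hf : Measurable f) (M : ℝ) (hM : ∀ x, |f x| ≤ M) :
    Continuous fun y => ∫ x, f x ∂(p y) := by
  have hint : ∀ y, Integrable f (p y) := fun y =>
    Integrable.of_bound hf.aestronglyMeasurable M (Eventually.of_forall hM)
  have key : ∀ y, ∫ x, f x ∂(p y) =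
      (∫ s in Set.Ioc 0 (2 * M), ((p y) {x | s < f x + M}).toReal) - M := by
    intro y
    have h1 : Integrable (fun x => f x + M) (p y) := (hint y).add (integrable_const M)
    have h2 := h1.integral_eq_integral_Ioc_meas_le (M := 2 * M)
      (Eventually.of_forall fun x => by
        have := neg_le_of_abs_le (hM x); simp only [Pi.zero_apply]; linarith)
      (Eventually.of_forall fun x => by
        have := le_of_abs_le (hM x); linarith)
    have h3 : ∫ x, (f x + M) ∂(p y) = ∫ x, f x ∂(p y) + M := by
      rw [integral_add (hint y) (integrable_const M)]; simp
    have h4 := h1.integral_eq_integral_meas_lt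
      (Eventually.of_forall fun x => by
        have := neg_le_of_abs_le (hM x); simp only [Pi.zero_apply]; linarith)
    have h5 : (∫ s in Set.Ioi 0, ((p y) {x | s < f x + M}).toReal) =
        ∫ s in Set.Ioc 0 (2 * M), ((p y) {x | s < f x + M}).toReal := by
      refine setIntegral_eq_of_subset_of_forall_sdiff_eq_zero measurableSet_Ioi ?_ ?_
      · intro s hs; exact hs.1
      · intro s hs
        have : {x | s < f x + M} = ∅ := by
          ext x
          simp only [Set.mem_ofPred_eq, Set.mem_empty_iff_false, iff_false, not_lt]
          have := le_of_abs_le (hM x)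
          simp only [Set.mem_sdiff, Set.mem_Ioi, Set.mem_Ioc, not_and, not_le] at hs
          have := hs.2 hs.1
          linarith
        rw [this]; simp
    simp only [Measure.real] at h4
    rw [h5] at h4
    linarith
  simp_rw [key]
  refine Continuous.sub ?_ continuous_const
  refine continuous_of_dominated (bound := fun _ => 1) ?_ ?_ ?_ ?_
  · intro y
    have : Antitone fun s => ((p y) {x | s < f x + M}).toReal := by
      intro s t hst
      refine ENNReal.toReal_mono (measure_ne_top _ _) (measure_mono ?_)
      intro x hx
      exact lt_of_le_of_lt hst hx
    exact this.measurable.aestronglyMeasurable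
  · intro y
    refine Eventually.of_forall fun s => ?_
    rw [Real.norm_of_nonneg ENNReal.toReal_nonneg]
    exact ENNReal.toReal_le_of_le_ofReal zero_le_one (by simpa using prob_le_one)
  · exact integrableOn_const measure_Ioc_lt_top.ne
  · refine Eventually.of_forall fun s => hs _ ?_
    exact measurableSet_lt measurable_const (hf.add_const M)

lemma fh_bdd {Z : Type*} [TopologicalSpace Z] [CompactSpace Z] (f : Z → ℝ) (hf : Continuous f) :
    ∃ K, ∀ z, |f z| ≤ K := by
  obtain ⟨K, hK⟩ := isCompact_univ.exists_bound_of_continuousOn hf.continuousOn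
  exact ⟨K, fun z => by simpa using hK z (Set.mem_univ z)⟩

lemma fh_integrable {Z : Type*} [TopologicalSpace Z] [CompactSpace Z] [MeasurableSpace Z]
    [OpensMeasurableSpace Z] (μ : Measure Z) [IsFiniteMeasure μ]
    (f : Z → ℝ) (hf : Continuous f) : Integrable f μ := by
  obtain ⟨K, hK⟩ := fh_bdd f hf
  exact Integrable.of_bound hf.measurable.aestronglyMeasurable K
    (Eventually.of_forall fun z => by simpa using hK z)

lemma fh_param {X B : Type*} [TopologicalSpace X] [FirstCountableTopology X] [CompactSpace X]
    [TopologicalSpace B] [CompactSpace B] [MeasurableSpace B] [OpensMeasurableSpace B]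
    (μ : Measure B) [IsFiniteMeasure μ] (G : X → B → ℝ)
    (hG : Continuous fun q : X × B => G q.1 q.2) : Continuous fun x => ∫ b, G x b ∂μ := by
  obtain ⟨K, hK⟩ := fh_bdd _ hG
  refine continuous_of_dominated (bound := fun _ => K) ?_ ?_ (integrable_const K) ?_
  · intro x
    have : Continuous (G x) := hG.comp (Continuous.prodMk_right x)
    exact this.measurable.aestronglyMeasurable
  · intro x
    exact Eventually.of_forall fun b => by simpa using hK (x, b)
  · exact Eventually.of_forall fun b => hG.comp (Continuous.prodMk_left b)

lemma fh_pi_update {N : ℕ} {A : Fin N → Type*} [∀ i, MeasurableSpace (A i)]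
    (m : ∀ j, Measure (A j)) (hm : ∀ j, IsProbabilityMeasure (m j)) (i : Fin N) (a : A i) :
    Measure.pi (Function.update m i (Measure.dirac a)) =
      (Measure.pi m).map (fun b => Function.update b i a) := by
  classical
  have hu : ∀ j, IsProbabilityMeasure (Function.update m i (Measure.dirac a) j) := by
    intro j
    by_cases h : j = i
    · subst h; rw [Function.update_self]; infer_instance
    · rw [Function.update_of_ne h]; exact hm j
  have hmeas : Measurable (fun b : ∀ j, A j => Function.update b i a) := by
    refine measurable_pi_lambda _ fun j => ?_
    by_cases h : j = i
    · subst h; simp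
    · simp only [Function.update_of_ne h]; exact measurable_pi_apply j
  refine Measure.pi_eq fun s hs => ?_
  rw [Measure.map_apply hmeas (MeasurableSet.univ_pi hs)]
  have hpre : (fun b : ∀ j, A j => Function.update b i a) ⁻¹' (Set.univ.pi s) =
      if a ∈ s i then Set.univ.pi (Function.update s i Set.univ) else ∅ := by
    ext b
    split_ifs with h
    · simp only [Set.mem_preimage, Set.mem_univ_pi]
      refine forall_congr' fun j => ?_
      by_cases hj : j = i
      · subst hj; simp [h]
      · simp [Function.update_of_ne hj]
    · simp only [Set.mem_preimage, Set.mem_univ_pi, Set.mem_empty_iff_false, iff_false]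
      intro hb
      exact h (by simpa using hb i)
  rw [hpre]
  rw [← Finset.mul_prod_erase Finset.univ _ (Finset.mem_univ i)]
  rw [Function.update_self, Measure.dirac_apply' _ (hs i)]
  split_ifs with h
  · rw [Measure.pi_pi, ← Finset.mul_prod_erase Finset.univ _ (Finset.mem_univ i)]
    simp only [Function.update_self, measure_univ, Set.indicator_of_mem h, Pi.one_apply, one_mul]
    refine Finset.prod_congr rfl fun j hj => ?_
    have : j ≠ i := Finset.ne_of_mem_erase hj
    rw [Function.update_of_ne this, Function.update_of_ne this]
  · simp [h]

lemma fh_tv_bound {α : Type*} [MeasurableSpace α] (μ ν : Measure α)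
    [IsProbabilityMeasure μ] [IsProbabilityMeasure ν] (D : {D : Set α // MeasurableSet D}) :
    |(μ D.1).toReal - (ν D.1).toReal| ≤ 1 := by
  have h1 : (μ D.1).toReal ≤ 1 := measureReal_le_one
  have h2 : (ν D.1).toReal ≤ 1 := measureReal_le_one
  have h3 : 0 ≤ (μ D.1).toReal := ENNReal.toReal_nonneg
  have h4 : 0 ≤ (ν D.1).toReal := ENNReal.toReal_nonneg
  rw [abs_le]; constructor <;> linarith

lemma fh_tv_le_two {α : Type*} [MeasurableSpace α] (μ ν : Measure α)
    [IsProbabilityMeasure μ] [IsProbabilityMeasure ν] : tvDist μ ν ≤ 2 := by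
  unfold tvDist
  have : Nonempty {D : Set α // MeasurableSet D} := ⟨⟨∅, MeasurableSet.empty⟩⟩
  have := ciSup_le (fh_tv_bound μ ν)
  linarith

lemma fh_le_tv {α : Type*} [MeasurableSpace α] (μ ν : Measure α)
    [IsProbabilityMeasure μ] [IsProbabilityMeasure ν] (D : Set α) (hD : MeasurableSet D) :
    |(μ D).toReal - (ν D).toReal| ≤ tvDist μ ν / 2 := by
  unfold tvDist
  have := le_ciSup (f := fun D : {D : Set α // MeasurableSet D} =>
    |(μ D.1).toReal - (ν D.1).toReal|) ⟨1, by rintro _ ⟨D, rfl⟩; exact fh_tv_bound μ ν D⟩ ⟨D, hD⟩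
  simp only at this
  linarith

/-- integrals of functions factoring through a finite-range quantizer vs. TV -/
lemma fh_tv_int {X : Type*} [MeasurableSpace X] [MeasurableSingletonClass X]
    (μ ν : Measure X) [IsProbabilityMeasure μ] [IsProbabilityMeasure ν]
    (S : Finset X) (Q : X → X) (hQ : Measurable Q) (hS : ∀ x, Q x ∈ S)
    (V : X → ℝ) (hV : ∀ x, V x = V (Q x)) (M : ℝ) (hM : ∀ x, |V x| ≤ M) :
    |∫ x, V x ∂μ - ∫ x, V x ∂ν| ≤ M * tvDist (μ.map Q) (ν.map Q) := by
  classical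
  have hM0 : 0 ≤ M := by
    have : Nonempty X := by
      by_contra h
      rw [not_nonempty_iff] at h
      have := measure_univ (μ := μ)
      rw [Set.univ_eq_empty_iff.2 h] at this
      simp at this
    exact (abs_nonneg _).trans (hM this.some)
  have hsum : ∀ (ρ : Measure X) [IsProbabilityMeasure ρ],
      ∫ x, V x ∂ρ = ∑ z ∈ S, V z * ((ρ.map Q) {z}).toReal := by
    intro ρ _
    have h1 : ∀ x, V x = ∑ z ∈ S, V z * (Q ⁻¹' {z}).indicator 1 x := by
      intro x
      rw [Finset.sum_eq_single (Q x)]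
      · simp [← hV x]
      · intro z _ hz
        simp [Ne.symm hz]
      · intro h; exact absurd (hS x) h
    rw [integral_congr_ae (Eventually.of_forall h1), integral_finsetSum]
    · conv_rhs => rw [show (∑ z ∈ S, V z * ((ρ.map Q) {z}).toReal) = _ from
        Finset.sum_congr rfl fun z hz => by rw [Measure.map_apply hQ (measurableSet_singleton z)]]
      refine Finset.sum_congr rfl fun z hz => ?_
      rw [integral_const_mul, integral_indicator_one (hQ (measurableSet_singleton z))]
      rfl
    · intro z hz
      exact ((integrable_const (1:ℝ)).indicator (hQ (measurableSet_singleton z))).const_mul _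
  have i1 : IsProbabilityMeasure (μ.map Q) := Measure.isProbabilityMeasure_map hQ.aemeasurable
  have i2 : IsProbabilityMeasure (ν.map Q) := Measure.isProbabilityMeasure_map hQ.aemeasurable
  rw [hsum μ, hsum ν, ← Finset.sum_sub_distrib]
  set μ' := μ.map Q
  set ν' := ν.map Q
  have hset : ∀ (ρ : Measure X) [IsProbabilityMeasure ρ] (P : Finset X),
      (ρ P).toReal = ∑ z ∈ P, (ρ {z}).toReal := by
    intro ρ _ P
    rw [← sum_measure_singleton, ENNReal.toReal_sum (fun z _ => measure_ne_top _ _)]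
  have habs : ∑ z ∈ S, |(μ' {z}).toReal - (ν' {z}).toReal| ≤ tvDist μ' ν' := by
    rw [← Finset.sum_filter_add_sum_filter_not S (fun z => (ν' {z}).toReal ≤ (μ' {z}).toReal)]
    set P := S.filter (fun z => (ν' {z}).toReal ≤ (μ' {z}).toReal)
    set P' := S.filter (fun z => ¬ (ν' {z}).toReal ≤ (μ' {z}).toReal)
    have e1 : ∑ z ∈ P, |(μ' {z}).toReal - (ν' {z}).toReal| ≤ tvDist μ' ν' / 2 := by
      refine le_trans (le_trans (le_of_eq ?_) (le_abs_self _)) (fh_le_tv μ' ν' P P.measurableSet)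
      rw [hset μ', hset ν', ← Finset.sum_sub_distrib]
      refine Finset.sum_congr rfl fun z hz => ?_
      rw [abs_of_nonneg]
      have := (Finset.mem_filter.1 hz).2
      linarith
    have e2 : ∑ z ∈ P', |(μ' {z}).toReal - (ν' {z}).toReal| ≤ tvDist μ' ν' / 2 := by
      refine le_trans (le_trans (le_of_eq ?_) (neg_le_abs _)) (fh_le_tv μ' ν' P' P'.measurableSet)
      rw [hset μ', hset ν', ← Finset.sum_sub_distrib, ← Finset.sum_neg_distrib]
      refine Finset.sum_congr rfl fun z hz => ?_
      rw [abs_of_nonpos]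
      have := (Finset.mem_filter.1 hz).2
      linarith
    linarith
  calc _ ≤ ∑ z ∈ S, |V z * (μ' {z}).toReal - V z * (ν' {z}).toReal| :=
        Finset.abs_sum_le_sum_abs _ _
    _ ≤ ∑ z ∈ S, M * |(μ' {z}).toReal - (ν' {z}).toReal| := by
        refine Finset.sum_le_sum fun z _ => ?_
        rw [← mul_sub, abs_mul]
        exact mul_le_mul_of_nonneg_right (hM z) (abs_nonneg _)
    _ ≤ _ := by
        rw [← Finset.mul_sum]
        exact mul_le_mul_of_nonneg_left habs hM0

lemma fh_int_close {Z : Type*} [MeasurableSpace Z] (μ : Measure Z) [IsProbabilityMeasure μ]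
    (f g : Z → ℝ) (hf : Integrable f μ) (hg : Integrable g μ) (e : ℝ)
    (h : ∀ᵐ z ∂μ, |f z - g z| ≤ e) : |∫ z, f z ∂μ - ∫ z, g z ∂μ| ≤ e := by
  rw [← integral_sub hf hg]
  have := norm_integral_le_of_norm_le_const (μ := μ) (f := fun z => f z - g z) (C := e) h
  simpa using this

lemma fh_abs_int {Z : Type*} [MeasurableSpace Z] (μ : Measure Z) [IsProbabilityMeasure μ]
    (f : Z → ℝ) (e : ℝ) (h : ∀ z, |f z| ≤ e) : |∫ z, f z ∂μ| ≤ e := by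
  have := norm_integral_le_of_norm_le_const (μ := μ) (f := f) (C := e) (Eventually.of_forall h)
  simpa using this

lemma fh_update_prob {N : ℕ} {A : Fin N → Type*} [∀ i, MeasurableSpace (A i)]
    (m : ∀ j, Measure (A j)) (hm : ∀ j, IsProbabilityMeasure (m j)) (i : Fin N) (a : A i) :
    ∀ j, IsProbabilityMeasure (Function.update m i (Measure.dirac a) j) := by
  intro j
  by_cases h : j = i
  · subst h; rw [Function.update_self]; infer_instance
  · rw [Function.update_of_ne h]; exact hm j

lemma fh_step {X : Type*} [MetricSpace X] [CompactSpace X] [MeasurableSpace X] [BorelSpace X]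
    {N : ℕ} {A : Fin N → Type*} [∀ i, MetricSpace (A i)] [∀ i, CompactSpace (A i)]
    [∀ i, Nonempty (A i)] [∀ i, MeasurableSpace (A i)] [∀ i, BorelSpace (A i)]
    (F G : X → (∀ i, A i) → ℝ)
    (hF : Continuous fun q : X × (∀ i, A i) => F q.1 q.2)
    (hG : Continuous fun q : X × (∀ i, A i) => G q.1 q.2)
    (e η δ : ℝ) (hδ : 0 < δ) (hFG : ∀ x b, |F x b - G x b| ≤ e)
    (hη : ∀ x y b b', dist x y + dist b b' ≤ 2 * δ → |F x b - F y b'| ≤ η)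
    (m : ∀ j, Measure (A j)) (hm : ∀ j, IsProbabilityMeasure (m j)) (i : Fin N)
    (S : Finset (A i)) (hS : ∀ a, ∃ b ∈ S, dist a b ≤ δ)
    (κ : Measure X) (hκ : IsProbabilityMeasure κ) (x : X) (hx : ∀ᵐ y ∂κ, dist x y ≤ 2 * δ) :
    |sInf {v : ℝ | ∃ a ∈ S, v = ∫ y, (∫ b, F y b
        ∂(Measure.pi (Function.update m i (Measure.dirac a)))) ∂κ} -
      ⨅ a : A i, ∫ b, G x b ∂(Measure.pi (Function.update m i (Measure.dirac a)))|
      ≤ e + 2 * η := by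
  have : ∀ i, SecondCountableTopology (A i) := fun i =>
    EMetric.secondCountable_of_sigmaCompact (A i)
  set μ : A i → Measure (∀ j, A j) :=
    fun a => Measure.pi (Function.update m i (Measure.dirac a)) with hμ
  have hμp : ∀ a, IsProbabilityMeasure (μ a) := fun a => by
    have := fh_update_prob m hm i a
    exact Measure.pi.instIsProbabilityMeasure _
  have hFx : ∀ x, Continuous (F x) := fun x => hF.comp (Continuous.prodMk_right x)
  have hGx : ∀ x, Continuous (G x) := fun x => hG.comp (Continuous.prodMk_right x)
  -- step 1: averaging over the cell
  have s1 : ∀ a, |∫ y, (∫ b, F y b ∂(μ a)) ∂κ - ∫ b, F x b ∂(μ a)| ≤ η := by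
    intro a
    have h := fh_int_close κ (fun y => ∫ b, F y b ∂(μ a)) (fun _ => ∫ b, F x b ∂(μ a))
      (fh_integrable κ _ (fh_param (μ a) F hF)) (integrable_const _) η ?_
    · simpa using h
    · filter_upwards [hx] with y hy
      refine fh_int_close (μ a) _ _ (fh_integrable _ _ (hFx y)) (fh_integrable _ _ (hFx x)) η ?_
      refine Eventually.of_forall fun b => hη y x b b ?_
      rw [dist_self, add_zero, dist_comm]; exact hy
  have s2 : ∀ a, |∫ b, F x b ∂(μ a) - ∫ b, G x b ∂(μ a)| ≤ e := fun a =>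
    fh_int_close (μ a) _ _ (fh_integrable _ _ (hFx x)) (fh_integrable _ _ (hGx x)) e
      (Eventually.of_forall fun b => hFG x b)
  have hcu : ∀ a : A i, Continuous fun b : ∀ j, A j => Function.update b i a := fun a =>
    continuous_id.update i continuous_const
  have hmap : ∀ a, ∫ b, F x b ∂(μ a) = ∫ b, F x (Function.update b i a) ∂(Measure.pi m) := by
    intro a
    rw [hμ]; simp only
    rw [fh_pi_update m hm i a, integral_map (hcu a).measurable.aemeasurable
      (hFx x).measurable.aestronglyMeasurable]
  have s3 : ∀ a a', dist a a' ≤ δ → |∫ b, F x b ∂(μ a) - ∫ b, F x b ∂(μ a')| ≤ η := by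
    intro a a' haa
    rw [hmap, hmap]
    refine fh_int_close (Measure.pi m) _ _ (fh_integrable _ _ ((hFx x).comp (hcu a)))
      (fh_integrable _ _ ((hFx x).comp (hcu a'))) η ?_
    refine Eventually.of_forall fun b => hη x x _ _ ?_
    rw [dist_self, zero_add, dist_pi_le_iff (by positivity)]
    intro j
    by_cases h : j = i
    · subst h; simp only [Function.update_self]; linarith
    · simp only [Function.update_of_ne h, dist_self]; positivity
  obtain ⟨K, hK⟩ := fh_bdd _ hG
  have hGb : BddBelow (Set.range fun a => ∫ b, G x b ∂(μ a)) := by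
    refine ⟨-K, ?_⟩
    rintro _ ⟨a, rfl⟩
    exact neg_le_of_abs_le (fh_abs_int (μ a) _ K fun b => hK (x, b))
  have hη0 : 0 ≤ η := (abs_nonneg _).trans (s1 (Classical.arbitrary _))
  have hfin : BddBelow {v : ℝ | ∃ a ∈ S, v = ∫ y, (∫ b, F y b ∂(μ a)) ∂κ} := by
    refine ⟨-K - e - η, ?_⟩
    rintro _ ⟨a, _, rfl⟩
    have h1 := abs_le.1 (s1 a)
    have h2 := abs_le.1 (s2 a)
    have h3 := neg_le_of_abs_le (fh_abs_int (μ a) _ K fun b => hK (x, b))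
    linarith
  have hne : {v : ℝ | ∃ a ∈ S, v = ∫ y, (∫ b, F y b ∂(μ a)) ∂κ}.Nonempty := by
    obtain ⟨b, hb, _⟩ := hS (Classical.arbitrary _)
    exact ⟨_, b, hb, rfl⟩
  rw [abs_le]
  constructor
  · rw [neg_le_sub_iff_le_add]
    have : (⨅ a, ∫ b, G x b ∂(μ a)) - (e + 2 * η) ≤
        sInf {v : ℝ | ∃ a ∈ S, v = ∫ y, (∫ b, F y b ∂(μ a)) ∂κ} := by
      refine le_csInf hne ?_
      rintro _ ⟨a, _, rfl⟩
      have h0 := ciInf_le hGb a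
      have h1 := abs_le.1 (s1 a)
      have h2 := abs_le.1 (s2 a)
      linarith
    linarith
  · rw [sub_le_iff_le_add, add_comm, ← sub_le_iff_le_add]
    refine le_ciInf fun a => ?_
    obtain ⟨a', ha', hd⟩ := hS a
    have h0 := csInf_le hfin ⟨a', ha', rfl⟩
    have h1 := abs_le.1 (s1 a')
    have h2 := abs_le.1 (s2 a)
    have h3 := abs_le.1 (s3 a a' hd)
    linarith

/-- measurability of the original-model value -/
lemma fh_meas {X : Type*} [MetricSpace X] [CompactSpace X] [MeasurableSpace X] [BorelSpace X]
    {B ι : Type*} [TopologicalSpace B] [CompactSpace B] [MeasurableSpace B]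
    [OpensMeasurableSpace B] [Nonempty ι]
    (G : X → B → ℝ) (hG : Continuous fun q : X × B => G q.1 q.2)
    (S : Finset X) (Q : X → X) (hQ : Measurable Q) (hS : ∀ x, Q x ∈ S)
    (μ : X → ι → Measure B) (hμ : ∀ z a, IsProbabilityMeasure (μ z a)) :
    Measurable fun x => ⨅ a, ∫ b, G x b ∂(μ (Q x) a) := by
  obtain ⟨K, hK⟩ := fh_bdd _ hG
  have h1 : ∀ z, Measurable fun x => ⨅ a, ∫ b, G x b ∂(μ z a) := by
    intro z
    refine UpperSemicontinuous.measurable ?_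
    refine upperSemicontinuous_ciInf ?_ ?_
    · intro x
      refine ⟨-K, ?_⟩
      rintro _ ⟨a, rfl⟩
      exact neg_le_of_abs_le (fh_abs_int (μ z a) _ K fun b => hK (x, b))
    · intro a
      exact (fh_param (μ z a) G hG).upperSemicontinuous
  classical
  have h2 : (fun x => ⨅ a, ∫ b, G x b ∂(μ (Q x) a)) =
      fun x => ∑ z ∈ S, (Q ⁻¹' {z}).indicator (fun x => ⨅ a, ∫ b, G x b ∂(μ z a)) x := by
    ext x
    rw [Finset.sum_eq_single (Q x)]
    · simp
    · intro z _ hz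
      simp [Ne.symm hz]
    · intro h; exact absurd (hS x) h
  rw [h2]
  exact Finset.measurable_sum _ fun z _ => (h1 z).indicator (hQ (measurableSet_singleton z))

lemma fh_meas_const {X : Type*} [MeasurableSpace X] [MeasurableSingletonClass X]
    (S : Finset X) (Q : X → X) (hQ : Measurable Q) (hS : ∀ x, Q x ∈ S)
    (V : X → ℝ) (hV : ∀ x, V x = V (Q x)) : Measurable V := by
  classical
  have h2 : V = fun x => ∑ z ∈ S, (Q ⁻¹' {z}).indicator (fun _ => V z) x := by
    ext x
    rw [Finset.sum_eq_single (Q x)]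
    · simp [← hV x]
    · intro z _ hz
      simp [Ne.symm hz]
    · intro h; exact absurd (hS x) h
  rw [h2]
  exact Finset.measurable_sum _ fun z _ =>
    measurable_const.indicator (hQ (measurableSet_singleton z))

lemma fh_cell_prob {X : Type*} [MeasurableSpace X] (ν : Measure X) [IsProbabilityMeasure ν]
    (Q : X → X) (z : X) (h : 0 < ν (Q ⁻¹' {z})) : IsProbabilityMeasure (cellMeasure ν Q z) := by
  constructor
  simp only [cellMeasure, Measure.smul_apply, Measure.restrict_apply_univ, smul_eq_mul]
  exact ENNReal.inv_mul_cancel h.ne' (measure_ne_top _ _)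

lemma fh_cell_ae {X : Type*} [MeasurableSpace X] [MeasurableSingletonClass X] (ν : Measure X)
    (Q : X → X) (hQ : Measurable Q) (z : X) : ∀ᵐ y ∂(cellMeasure ν Q z), Q y = z := by
  unfold cellMeasure
  refine Measure.ae_smul_measure ?_ _
  exact ae_restrict_mem (hQ (measurableSet_singleton z))

end helpers
/-- Finite-horizon approximation of nonzero-sum Markov games (Theorem 4.1 of the paper):
convergence of the extended finite-model best-response values to the original-model
best-response values against the extended equilibrium policies. -/
theorem finite_horizon_value_approximation
    -- compact metric state space
    (X : Type*) [MetricSpace X] [CompactSpace X] [Nonempty X]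
    [MeasurableSpace X] [BorelSpace X]
    -- compact metric action spaces of the N players
    (N : ℕ) (A : Fin N → Type*) [∀ i, MetricSpace (A i)] [∀ i, CompactSpace (A i)]
    [∀ i, Nonempty (A i)] [∀ i, MeasurableSpace (A i)] [∀ i, BorelSpace (A i)]
    -- bounded continuous one-stage cost functions
    (c : Fin N → X → (∀ i, A i) → ℝ)
    (hc : ∀ i, Continuous fun q : X × (∀ i, A i) => c i q.1 q.2)
    -- setwise continuous Borel stochastic kernel
    (p : X → (∀ i, A i) → Measure X)
    (hp_prob : ∀ x a, IsProbabilityMeasure (p x a))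
    (hp_meas : ∀ D : Set X, MeasurableSet D →
      Measurable fun q : X × (∀ i, A i) => p q.1 q.2 D)
    (hp_setwise : ∀ D : Set X, MeasurableSet D →
      Continuous fun q : X × (∀ i, A i) => (p q.1 q.2 D).toReal)
    -- finite horizon
    (T : ℕ)
    -- quantization data: finite δ-nets, nearest-point quantizer, weighting measures
    (Xd : ℝ → Finset X) (Q : ℝ → X → X) (Ad : ℝ → ∀ i, Finset (A i)) (ν : ℝ → Measure X)
    (hXd_net : ∀ δ > (0:ℝ), ∀ x : X, ∃ z ∈ Xd δ, dist x z ≤ δ)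
    (hQ_mem : ∀ δ > (0:ℝ), ∀ x, Q δ x ∈ Xd δ)
    (hQ_near : ∀ δ > (0:ℝ), ∀ x, ∀ z ∈ Xd δ, dist x (Q δ x) ≤ dist x z)
    (hQ_meas : ∀ δ > (0:ℝ), Measurable (Q δ))
    (hAd_net : ∀ δ > (0:ℝ), ∀ i, ∀ a : A i, ∃ b ∈ Ad δ i, dist a b ≤ δ)
    (hν_prob : ∀ δ > (0:ℝ), IsProbabilityMeasure (ν δ))
    (hν_pos : ∀ δ > (0:ℝ), ∀ z ∈ Xd δ, 0 < ν δ (Q δ ⁻¹' {z}))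
    -- the quantization condition `lim_{δ→0} ω_δ(2δ) = 0`
    (hquant : Tendsto
      (fun δ : ℝ => sSup {v : ℝ | ∃ x y : X, ∃ a b : ∀ i, A i,
        dist x y + dist a b ≤ 2 * δ ∧
        v = tvDist ((p x a).map (Q δ)) ((p y b).map (Q δ))})
      (𝓝[>] 0) (𝓝 0))
    -- (already extended) Markov policies of the finite δ-model: probability measures
    -- supported on the finite action nets, piecewise constant on quantization cells
    (π : ℝ → (i : Fin N) → ℕ → X → Measure (A i))
    (hπ_prob : ∀ δ > (0:ℝ), ∀ i t, t < T → ∀ x, IsProbabilityMeasure (π δ i t x))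
    (hπ_supp : ∀ δ > (0:ℝ), ∀ i t, t < T → ∀ x, π δ i t x (Ad δ i) = 1)
    (hπ_const : ∀ δ > (0:ℝ), ∀ i t, t < T → ∀ x, π δ i t x = π δ i t (Q δ x))
    -- the extended finite-model best-response values Ĵ*_{δ,t}(π^{*,-i}_δ;·)
    (Jd : ℝ → Fin N → ℕ → X → ℝ)
    (hJd_const : ∀ δ > (0:ℝ), ∀ i t, t ≤ T → ∀ x, Jd δ i t x = Jd δ i t (Q δ x))
    (hJd_T : ∀ δ > (0:ℝ), ∀ i x, Jd δ i T x = 0)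
    -- backward recursion of the finite δ-model, per state of the net
    (hJd_rec : ∀ δ > (0:ℝ), ∀ i t, t < T → ∀ z ∈ Xd δ,
      Jd δ i t z = sInf {v : ℝ | ∃ a ∈ Ad δ i, v =
        ∫ x, (∫ b, (c i x b + ∫ y, Jd δ i (t+1) y ∂(p x b))
            ∂(Measure.pi (Function.update (fun j => π δ j t z) i (Measure.dirac a))))
          ∂(cellMeasure (ν δ) (Q δ) z)})
    -- the minimum is attained by the equilibrium mixed action π^{*,i}_{δ,t}(z)
    (hJd_attain : ∀ δ > (0:ℝ), ∀ i t, t < T → ∀ z ∈ Xd δ,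
      Jd δ i t z =
        ∫ x, (∫ b, (c i x b + ∫ y, Jd δ i (t+1) y ∂(p x b))
            ∂(Measure.pi fun j => π δ j t z))
          ∂(cellMeasure (ν δ) (Q δ) z))
    -- the original-model best-response values J*_t(π^{*,-i}_δ;·) against the extended policies
    (Js : ℝ → Fin N → ℕ → X → ℝ)
    (hJs_T : ∀ δ > (0:ℝ), ∀ i x, Js δ i T x = 0)
    (hJs_rec : ∀ δ > (0:ℝ), ∀ i t, t < T → ∀ x : X,
      Js δ i t x = ⨅ a : A i,
        ∫ b, (c i x b + ∫ y, Js δ i (t+1) y ∂(p x b))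
          ∂(Measure.pi (Function.update (fun j => π δ j t x) i (Measure.dirac a)))) :
    -- conclusion: uniform convergence of the value functions as δ → 0
    ∀ i : Fin N, ∀ t ≤ T,
      Tendsto (fun δ : ℝ => ⨆ x : X, |Jd δ i t x - Js δ i t x|) (𝓝[>] 0) (𝓝 0) := by
  intro i
  have hsc : ∀ i, SecondCountableTopology (A i) := fun i =>
    EMetric.secondCountable_of_sigmaCompact (A i)
  obtain ⟨K, hK⟩ := fh_bdd _ (hc i)
  have hK0 : 0 ≤ K := (abs_nonneg _).trans
    (hK (Classical.arbitrary X, fun i => Classical.arbitrary (A i)))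
  set w : ℝ → ℝ := fun δ : ℝ => sSup {v : ℝ | ∃ x y : X, ∃ a b : ∀ i, A i,
        dist x y + dist a b ≤ 2 * δ ∧
        v = tvDist ((p x a).map (Q δ)) ((p y b).map (Q δ))} with hw
  have hkey : ∀ δ > (0:ℝ), ∀ ηc : ℝ,
      (∀ x y b b', dist x y + dist b b' ≤ 2 * δ → |c i x b - c i y b'| ≤ ηc) →
      ∀ s ≤ T, (∀ x, |Jd δ i (T - s) x| ≤ s * K) ∧ Measurable (Js δ i (T - s)) ∧
        (∀ x, |Js δ i (T - s) x| ≤ s * K) ∧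
        ∀ x, |Jd δ i (T - s) x - Js δ i (T - s) x| ≤ s * (2 * (ηc + (T * K) * w δ)) := by
    intro δ hδ ηc hηc s
    have hνp := hν_prob δ hδ
    have hQm := hQ_meas δ hδ
    have hJdm : ∀ t ≤ T, Measurable (Jd δ i t) := fun t ht =>
      fh_meas_const (Xd δ) (Q δ) hQm (hQ_mem δ hδ) _ (hJd_const δ hδ i t ht)
    have hwle : ∀ x y : X, ∀ a b : ∀ i, A i, dist x y + dist a b ≤ 2 * δ →
        tvDist ((p x a).map (Q δ)) ((p y b).map (Q δ)) ≤ w δ := by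
      intro x y a b hd
      refine le_csSup ⟨2, ?_⟩ ⟨x, y, a, b, hd, rfl⟩
      rintro _ ⟨x, y, a, b, _, rfl⟩
      have := Measure.isProbabilityMeasure_map (μ := p x a) hQm.aemeasurable
      have := Measure.isProbabilityMeasure_map (μ := p y b) hQm.aemeasurable
      exact fh_tv_le_two _ _
    have hQd : ∀ x, dist x (Q δ x) ≤ δ := by
      intro x
      obtain ⟨z, hz, hd⟩ := hXd_net δ hδ x
      exact (hQ_near δ hδ x z hz).trans hd
    induction s with
    | zero =>
      intro _
      have h0 : Js δ i T = fun _ => 0 := funext (hJs_T δ hδ i)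
      refine ⟨fun x => ?_, ?_, fun x => ?_, fun x => ?_⟩
      · simp [hJd_T δ hδ]
      · simp only [Nat.sub_zero, h0]; exact measurable_const
      · simp [hJs_T δ hδ]
      · simp [hJs_T δ hδ, hJd_T δ hδ]
    | succ s ih =>
      intro hs
      obtain ⟨ih1, ih2, ih3, ih4⟩ := ih (by omega)
      set t := T - (s + 1) with ht
      have htT : t < T := by omega
      have hst : T - s = t + 1 := by omega
      rw [hst] at ih1 ih2 ih3 ih4
      have hpr := fun j x => hπ_prob δ hδ j t htT x
      set F : X → (∀ j, A j) → ℝ := fun x b => c i x b + ∫ y, Jd δ i (t+1) y ∂(p x b) with hFd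
      set G : X → (∀ j, A j) → ℝ := fun x b => c i x b + ∫ y, Js δ i (t+1) y ∂(p x b) with hGd
      have hF : Continuous fun q : X × (∀ i, A i) => F q.1 q.2 :=
        (hc i).add (fh_setwise (fun q : X × (∀ i, A i) => p q.1 q.2)
          (fun q => hp_prob q.1 q.2) hp_setwise _ (hJdm (t+1) (by omega)) _ ih1)
      have hG : Continuous fun q : X × (∀ i, A i) => G q.1 q.2 :=
        (hc i).add (fh_setwise (fun q : X × (∀ i, A i) => p q.1 q.2)
          (fun q => hp_prob q.1 q.2) hp_setwise _ ih2 _ ih3)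
      have hFb : ∀ x b, |F x b| ≤ (s + 1 : ℕ) * K := by
        intro x b
        have h1 := fh_abs_int (p x b) _ _ ih1
        have h2 := hK (x, b)
        refine (abs_add_le _ _).trans ?_
        push_cast
        simp only at h2
        linarith
      have hGb : ∀ x b, |G x b| ≤ (s + 1 : ℕ) * K := by
        intro x b
        have h1 := fh_abs_int (p x b) _ _ ih3
        have h2 := hK (x, b)
        refine (abs_add_le _ _).trans ?_
        push_cast
        simp only at h2
        linarith
      have hJsrec : ∀ x, Js δ i t x = ⨅ a : A i, ∫ b, G x b
          ∂(Measure.pi (Function.update (fun j => π δ j t (Q δ x)) i (Measure.dirac a))) := by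
        intro x
        rw [hJs_rec δ hδ i t htT x]
        have : (fun j => π δ j t x) = fun j => π δ j t (Q δ x) :=
          funext fun j => hπ_const δ hδ j t htT x
        rw [this]
      have hμp : ∀ z (a : A i), IsProbabilityMeasure
          (Measure.pi (Function.update (fun j => π δ j t z) i (Measure.dirac a))) := by
        intro z a
        have := fh_update_prob (fun j => π δ j t z) (fun j => hpr j z) i a
        exact Measure.pi.instIsProbabilityMeasure _
      have hcp : ∀ x, IsProbabilityMeasure (cellMeasure (ν δ) (Q δ) (Q δ x)) := fun x =>
        fh_cell_prob _ _ _ (hν_pos δ hδ _ (hQ_mem δ hδ x))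
      refine ⟨fun x => ?_, ?_, fun x => ?_, fun x => ?_⟩
      · rw [hJd_const δ hδ i t htT.le x, hJd_attain δ hδ i t htT _ (hQ_mem δ hδ x)]
        have := hcp x
        refine fh_abs_int _ _ _ fun y => ?_
        exact fh_abs_int (Measure.pi fun j => π δ j t (Q δ x)) _ _ (hFb y)
      · rw [show Js δ i t = _ from funext hJsrec]
        exact fh_meas G hG (Xd δ) (Q δ) hQm (hQ_mem δ hδ) (fun z (a : A i) =>
          Measure.pi (Function.update (fun j => π δ j t z) i (Measure.dirac a))) hμp
      · rw [hJsrec]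
        have hb := fun a : A i => abs_le.1 (fh_abs_int
          (Measure.pi (Function.update (fun j => π δ j t (Q δ x)) i (Measure.dirac a)))
          (G x) _ (hGb x))
        rw [abs_le]
        refine ⟨le_ciInf fun a => (hb a).1, ?_⟩
        refine (ciInf_le ⟨-((s + 1 : ℕ) * K), ?_⟩ (Classical.arbitrary (A i))).trans (hb _).2
        · rintro _ ⟨a, rfl⟩
          exact (hb a).1
      · rw [hJsrec, hJd_const δ hδ i t htT.le x, hJd_rec δ hδ i t htT _ (hQ_mem δ hδ x)]
        have hmain := fh_step F G hF hG (s * (2 * (ηc + (T * K) * w δ)))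
          (ηc + (T * K) * w δ) δ hδ ?_ ?_ (fun j => π δ j t (Q δ x)) (fun j => hpr j _) i
          (Ad δ i) (hAd_net δ hδ i) (cellMeasure (ν δ) (Q δ) (Q δ x)) (hcp x) x ?_
        · refine hmain.trans (le_of_eq ?_)
          push_cast
          ring
        · intro x b
          simp only [hFd, hGd, add_sub_add_left_eq_sub]
          refine fh_int_close (p x b) _ _ ?_ ?_ _ (Eventually.of_forall ih4)
          · exact Integrable.of_bound (hJdm (t+1) (by omega)).aestronglyMeasurable _
              (Eventually.of_forall ih1)
          · exact Integrable.of_bound ih2.aestronglyMeasurable _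
              (Eventually.of_forall ih3)
        · intro x y b b' hd
          have h1 := hηc x y b b' hd
          have hsT : (s:ℝ) * K ≤ T * K := by
            refine mul_le_mul_of_nonneg_right ?_ hK0
            exact_mod_cast (by omega : s ≤ T)
          have h2 := fh_tv_int (p x b) (p y b') (Xd δ) (Q δ) hQm (hQ_mem δ hδ)
            (Jd δ i (t+1)) (hJd_const δ hδ i (t+1) (by omega)) (T * K)
            (fun x => (ih1 x).trans hsT)
          have h3 := mul_le_mul_of_nonneg_left (hwle x y b b' hd)
            (by positivity : (0:ℝ) ≤ T * K)
          have h4 : F x b - F y b' = (c i x b - c i y b') +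
            (∫ y, Jd δ i (t+1) y ∂(p x b) - ∫ z, Jd δ i (t+1) z ∂(p y b')) := by
            simp only [hFd]; ring
          rw [h4]
          refine (abs_add_le _ _).trans ?_
          linarith
        · filter_upwards [fh_cell_ae (ν δ) (Q δ) hQm (Q δ x)] with y hy
          have h1 := hQd x
          have h2 := hQd y
          rw [hy] at h2
          have h3 := dist_triangle_right x y (Q δ x)
          linarith
  intro t ht
  have huc : UniformContinuous fun q : X × (∀ i, A i) => c i q.1 q.2 :=
    CompactSpace.uniformContinuous_of_continuous (hc i)
  rw [Metric.tendsto_nhds]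
  intro ε hε
  set C : ℝ := 2 * (T + 1) with hC
  have hCpos : 0 < C := by positivity
  obtain ⟨r, hr, hrc⟩ := Metric.uniformContinuous_iff.1 huc (ε / (4 * C)) (by positivity)
  have hw0 : Tendsto (fun δ => (T * K) * w δ) (𝓝[>] 0) (𝓝 0) := by
    simpa using hquant.const_mul (T * K)
  have e1 : ∀ᶠ δ in 𝓝[>] (0:ℝ), (T * K) * w δ < ε / (4 * C) :=
    hw0.eventually_lt_const (by positivity)
  have e2 : ∀ᶠ δ in 𝓝[>] (0:ℝ), δ < r / 2 :=
    (tendsto_id.mono_left nhdsWithin_le_nhds).eventually_lt_const (by positivity)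
  filter_upwards [e1, e2, self_mem_nhdsWithin] with δ h1 h2 hδ
  have hδ : 0 < δ := hδ
  have hk := (hkey δ hδ (ε / (4 * C)) ?_ (T - t) (by omega)).2.2.2
  · rw [show T - (T - t) = t by omega] at hk
    have hbound : ∀ x, |Jd δ i t x - Js δ i t x| ≤ ε / 2 := by
      intro x
      have h0 := (abs_nonneg _).trans (hk x)
      refine (hk x).trans ?_
      have hle : ((T - t : ℕ) : ℝ) ≤ T + 1 := by
        have : ((T - t : ℕ) : ℝ) ≤ T := by exact_mod_cast Nat.sub_le T t
        linarith
      have hnn : (0:ℝ) ≤ ((T - t : ℕ) : ℝ) := Nat.cast_nonneg _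
      calc ((T - t : ℕ) : ℝ) * (2 * (ε / (4 * C) + T * K * w δ))
          ≤ ((T - t : ℕ) : ℝ) * (2 * (ε / (4 * C) + ε / (4 * C))) := by gcongr
        _ ≤ (T + 1) * (2 * (ε / (4 * C) + ε / (4 * C))) := by gcongr
        _ = ε / 2 := by rw [hC]; field_simp; ring
    have hs1 : (⨆ x : X, |Jd δ i t x - Js δ i t x|) ≤ ε / 2 := ciSup_le hbound
    have hs0 : 0 ≤ ⨆ x : X, |Jd δ i t x - Js δ i t x| :=
      Real.iSup_nonneg fun x => abs_nonneg _
    rw [Real.dist_eq, sub_zero, abs_of_nonneg hs0]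
    linarith
  · intro x y b b' hd
    have := hrc (a := (x, b)) (b := (y, b')) (by
      rw [Prod.dist_eq, max_lt_iff]
      have := dist_nonneg (x := x) (y := y)
      have := dist_nonneg (x := b) (y := b')
      constructor <;> simp only <;> linarith)
    rw [Real.dist_eq] at this
    exact this.le

end
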